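/- arXiv:2411.12568 — 2 statements merged into one kernel-verified Lean document; each statement's English description precedes it below -/
import Mathlib

section
/- Fix real parameters 𝔪, a, Q, Λ and real numbers r, θ, and set b := 1 + Λa²/3, κ := 1 + (Λa²/3)cos²θ, ϱ² := r² + a² cos²θ, μ := (r² + a²)(1 − Λr²/3) − 2𝔪r + b²Q². Assume b ≠ 0, κ ≠ 0, μ ≠ 0, sin θ ≠ 0, ϱ² ≠ 0. Let M be the symmetric 4×4 real matrix, with index order (t, r, θ, φ), defined by M := −(μ/(b²ϱ²)) u uᵀ + (ϱ²/μ) e_r e_rᵀ + (ϱ²/κ) e_θ e_θᵀ + (κ sin²θ/(b²ϱ²)) v vᵀ, where u = (1, 0, 0, −a sin²θ)ᵀ, v = (a, 0, 0, −(r²+a²))ᵀ, and e_r, e_θ are the standard basis vectors in the r- and θ-slots. Then M is invertible, and for every ζ = (σ, ξ, η_θ, η_φ) ∈ ℝ⁴, setting ξ_BL := ξ + (b/μ)((r²+a²)σ + a η_φ) and ζ_BL := (σ, ξ_BL, η_θ, η_φ), one has ϱ² · ζ_BLᵀ M⁻¹ ζ_BL = μ ξ² + 2b((r²+a²)σ +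 a η_φ) ξ + κ η_θ² + (b²/(κ sin²θ))(η_φ + a sin²θ · σ)². -/
open Matrix

/-!
The metric is diagonal in the coframe `u, dr, dθ, v`, so its inverse is diagonal in the dual frame
with reciprocal weights. The vector dual to `u` is `((r² + a²) ∂_t + a ∂_φ) / ϱ²`, hence the dual
form contains the singular term `-(b²/μ) L²` with `L = (r² + a²) σ + a η_φ`. The shift from `ξ` to
`ξ_BL` turns the radial term into `μ (ξ + (b/μ) L)² = μ ξ² + 2 b L ξ + (b²/μ) L²`, which cancels it.
-/

section DualFrames

variable {m n R : Type*} [Fintype m] [CommRing R]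

theorem sum_smul_vecMulVec_eq_transpose_mul_diagonal_mul [DecidableEq m] (c : m → R)
    (W : Matrix m n R) :
    ∑ i, c i • vecMulVec (W i) (W i) = Wᵀ * diagonal c * W := by
  ext j k
  rw [Matrix.sum_apply, Matrix.mul_apply]
  refine Finset.sum_congr rfl fun i _ => ?_
  rw [Matrix.smul_apply, vecMulVec_apply, mul_diagonal, transpose_apply, smul_eq_mul]
  ring

theorem dotProduct_sum_smul_vecMulVec_mulVec [Fintype n] (d : m → R) (E : Matrix m n R)
    (x : n → R) :
    x ⬝ᵥ ((∑ i, d i • vecMulVec (E i) (E i)) *ᵥ x) = ∑ i, d i * (E *ᵥ x) i ^ 2 := by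
  rw [sum_mulVec, dotProduct_sum]
  refine Finset.sum_congr rfl fun i _ => ?_
  rw [smul_mulVec, vecMulVec_mulVec, dotProduct_smul, op_smul_eq_smul, dotProduct_smul,
    dotProduct_comm x, smul_eq_mul, smul_eq_mul, sq, mulVec]

variable [DecidableEq m] {c d : m → R} {W E : Matrix m m R}

theorem sum_smul_vecMulVec_mul_sum_smul_vecMulVec (hcd : c * d = 1) (hWE : W * Eᵀ = 1) :
    (∑ i, c i • vecMulVec (W i) (W i)) * ∑ i, d i • vecMulVec (E i) (E i) = 1 := by
  have hdiag : diagonal c * diagonal d = 1 := by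
    rw [diagonal_mul_diagonal, ← diagonal_one]
    exact congrArg diagonal hcd
  have hEW : Wᵀ * E = 1 := by
    rw [mul_eq_one_comm, ← transpose_transpose E, ← transpose_mul, hWE, transpose_one]
  calc (∑ i, c i • vecMulVec (W i) (W i)) * ∑ i, d i • vecMulVec (E i) (E i)
      = Wᵀ * (diagonal c * (W * Eᵀ) * diagonal d) * E := by
        simp only [sum_smul_vecMulVec_eq_transpose_mul_diagonal_mul, Matrix.mul_assoc]
    _ = 1 := by rw [hWE, Matrix.mul_one, hdiag, Matrix.mul_one, hEW]

theorem isUnit_sum_smul_vecMulVec (hcd : c * d = 1) (hWE : W * Eᵀ = 1) :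
    IsUnit (∑ i, c i • vecMulVec (W i) (W i)) :=
  .of_mul_eq_one _ (sum_smul_vecMulVec_mul_sum_smul_vecMulVec hcd hWE)

theorem dotProduct_inv_sum_smul_vecMulVec_mulVec (hcd : c * d = 1) (hWE : W * Eᵀ = 1)
    (x : m → R) :
    x ⬝ᵥ ((∑ i, c i • vecMulVec (W i) (W i))⁻¹ *ᵥ x) = ∑ i, d i * (E *ᵥ x) i ^ 2 := by
  rw [inv_eq_right_inv (sum_smul_vecMulVec_mul_sum_smul_vecMulVec hcd hWE),
    dotProduct_sum_smul_vecMulVec_mulVec]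

end DualFrames

namespace KerrNewmanDeSitter

variable {K : Type*} [Field K]

/-- The Boyer–Lindquist coframe diagonalizing the Kerr–Newman–de Sitter metric: the rows are the
covectors `u, dr, dθ, v` in the coordinates `(t, r, θ, φ)`. Here and below `A` stands for
`r² + a²` and `s` for `sin²θ`, so that `ϱ² = A - a² s`. -/
def coframe (a A s : K) : Matrix (Fin 4) (Fin 4) K :=
  !![1, 0, 0, -(a * s);
     0, 1, 0, 0;
     0, 0, 1, 0;
     a, 0, 0, -A]

/-- The frame dual to `coframe a A s`, as rows; the first and last rows are defined with the junk
value `0` where `ϱ² = A - a² s` vanishes. -/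
def frame (a A s : K) : Matrix (Fin 4) (Fin 4) K :=
  let ρsq := A - a ^ 2 * s
  !![A / ρsq, 0, 0, a / ρsq;
     0, 1, 0, 0;
     0, 0, 1, 0;
     -(a * s / ρsq), 0, 0, -(1 / ρsq)]

/-- The diagonal entries of the metric in `coframe`, with `s` standing for `sin²θ`. -/
def weight (b κ ρsq μ s : K) : Fin 4 → K :=
  ![-(μ / (b ^ 2 * ρsq)), ρsq / μ, ρsq / κ, κ * s / (b ^ 2 * ρsq)]

theorem coframe_mul_transpose_frame {a A s : K} (hρ : A - a ^ 2 * s ≠ 0) :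
    coframe a A s * (frame a A s)ᵀ = 1 := by
  ext i j
  fin_cases i <;> fin_cases j <;>
    simp [coframe, frame, mul_apply, Fin.sum_univ_four] <;> grind

theorem weight_mul_inv {b κ ρsq μ s : K} (hb : b ≠ 0) (hκ : κ ≠ 0) (hρ : ρsq ≠ 0) (hμ : μ ≠ 0)
    (hs : s ≠ 0) : weight b κ ρsq μ s * (weight b κ ρsq μ s)⁻¹ = 1 := by
  funext i
  refine mul_inv_cancel₀ ?_
  fin_cases i <;> simp [weight, *]

theorem frame_mulVec (a A s σ ξ ηθ ηφ : K) :
    frame a A s *ᵥ ![σ, ξ, ηθ, ηφ] =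
      ![(A * σ + a * ηφ) / (A - a ^ 2 * s), ξ, ηθ,
        -((ηφ + a * s * σ) / (A - a ^ 2 * s))] := by
  ext i
  fin_cases i <;> simp [frame, mulVec, dotProduct, Fin.sum_univ_four] <;> ring

theorem mul_sum_inv_weight_mul_frame_mulVec_sq {a A s : K} (b κ μ : K)
    (hρ : A - a ^ 2 * s ≠ 0) (σ ξ ηθ ηφ : K) :
    (A - a ^ 2 * s) * ∑ i, (weight b κ (A - a ^ 2 * s) μ s)⁻¹ i *
        (frame a A s *ᵥ ![σ, ξ, ηθ, ηφ]) i ^ 2 =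
      -(b ^ 2 / μ) * (A * σ + a * ηφ) ^ 2 + μ * ξ ^ 2 + κ * ηθ ^ 2 +
        b ^ 2 / (κ * s) * (ηφ + a * s * σ) ^ 2 := by
  rw [frame_mulVec, Fin.sum_univ_four]
  simp only [weight, Fin.isValue, Pi.inv_apply, cons_val_zero, cons_val_one, cons_val, inv_neg,
    inv_div]
  field_simp

theorem kerrStar_shift_complete_square {μ : K} (hμ : μ ≠ 0) (b L ξ : K) :
    -(b ^ 2 / μ) * L ^ 2 + μ * (ξ + b / μ * L) ^ 2 = μ * ξ ^ 2 + 2 * b * L * ξ := by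
  field_simp
  ring

end KerrNewmanDeSitter

open KerrNewmanDeSitter

/-- The Kerr–Newman–de Sitter metric in Boyer–Lindquist coordinates `(t, r, θ, φ)` has matrix
`M = -(μ/(b²ϱ²)) u uᵀ + (ϱ²/μ) e_r e_rᵀ + (ϱ²/κ) e_θ e_θᵀ + (κ sin²θ/(b²ϱ²)) v vᵀ` with
`u = (1,0,0,-a sin²θ)`, `v = (a,0,0,-(r²+a²))`. It is invertible, and the rescaled dual metric
function in Kerr-star coordinates is
`ϱ² ζ_BLᵀ M⁻¹ ζ_BL = μ ξ² + 2b((r²+a²)σ + a η_φ)ξ + κ η_θ² + (b²/(κ sin²θ))(η_φ + a sin²θ σ)²`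
where `ξ_BL = ξ + (b/μ)((r²+a²)σ + a η_φ)` and `ζ_BL = (σ, ξ_BL, η_θ, η_φ)`. -/
theorem kerr_star_dual_metric_identity (𝔪 a Q Λ r θ : ℝ)
    (b κ ρsq μ : ℝ)
    (hb : b = 1 + Λ * a ^ 2 / 3)
    (hκ : κ = 1 + Λ * a ^ 2 / 3 * Real.cos θ ^ 2)
    (hρsq : ρsq = r ^ 2 + a ^ 2 * Real.cos θ ^ 2)
    (hμ : μ = (r ^ 2 + a ^ 2) * (1 - Λ * r ^ 2 / 3) - 2 * 𝔪 * r + b ^ 2 * Q ^ 2)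
    (hb0 : b ≠ 0) (hκ0 : κ ≠ 0) (hμ0 : μ ≠ 0) (hsin : Real.sin θ ≠ 0) (hρ0 : ρsq ≠ 0)
    (u v er eθ : Fin 4 → ℝ)
    (hu : u = ![1, 0, 0, -(a * Real.sin θ ^ 2)])
    (hv : v = ![a, 0, 0, -(r ^ 2 + a ^ 2)])
    (her : er = ![0, 1, 0, 0]) (heθ : eθ = ![0, 0, 1, 0])
    (M : Matrix (Fin 4) (Fin 4) ℝ)
    (hM : M = (-(μ / (b ^ 2 * ρsq))) • vecMulVec u u
        + (ρsq / μ) • vecMulVec er er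
        + (ρsq / κ) • vecMulVec eθ eθ
        + (κ * Real.sin θ ^ 2 / (b ^ 2 * ρsq)) • vecMulVec v v) :
    IsUnit M ∧
    ∀ σ ξ ηθ ηφ ξBL : ℝ,
      ξBL = ξ + b / μ * ((r ^ 2 + a ^ 2) * σ + a * ηφ) →
      ρsq * (![σ, ξBL, ηθ, ηφ] ⬝ᵥ (M⁻¹ *ᵥ ![σ, ξBL, ηθ, ηφ]))
        = μ * ξ ^ 2 + 2 * b * ((r ^ 2 + a ^ 2) * σ + a * ηφ) * ξ
          + κ * ηθ ^ 2
          + b ^ 2 / (κ * Real.sin θ ^ 2) * (ηφ + a * Real.sin θ ^ 2 * σ) ^ 2 := by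
  have hρ : ρsq = r ^ 2 + a ^ 2 - a ^ 2 * Real.sin θ ^ 2 := by
    rw [hρsq, Real.cos_sq']; ring
  have hρ' : r ^ 2 + a ^ 2 - a ^ 2 * Real.sin θ ^ 2 ≠ 0 := hρ ▸ hρ0
  have hframe := coframe_mul_transpose_frame hρ'
  have hweight := weight_mul_inv hb0 hκ0 hρ0 hμ0 (pow_ne_zero 2 hsin)
  have hdiag : M = ∑ i, weight b κ ρsq μ (Real.sin θ ^ 2) i •
      vecMulVec (coframe a (r ^ 2 + a ^ 2) (Real.sin θ ^ 2) i)
        (coframe a (r ^ 2 + a ^ 2) (Real.sin θ ^ 2) i) := by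
    subst hM hu hv her heθ
    rw [Fin.sum_univ_four]
    rfl
  refine ⟨hdiag ▸ isUnit_sum_smul_vecMulVec hweight hframe, ?_⟩
  rintro σ ξ ηθ ηφ _ rfl
  rw [hdiag, dotProduct_inv_sum_smul_vecMulVec_mulVec hweight hframe, hρ,
    mul_sum_inv_weight_mul_frame_mulVec_sq b κ μ hρ', kerrStar_shift_complete_square hμ0]
end

section
/- Fix real parameters 𝔪, a, Q, Λ with b := 1 + Λa²/3 > 0, set κ(θ) := 1 + (Λa²/3)cos²θ and μ(r) := (r² + a²)(1 − Λr²/3) − 2𝔪r + b²Q², and assume μ(r₊) = 0, μ′(r₊) > 0, and r₊² + a² > 0. Fix 0 < θ₁ < θ₂ < π, ε > 0, and a smooth function r₀ : [θ₁,θ₂] × (−ε,ε)³ → ℝ with r₀(θ, 0, 0, 0) = r₊ for all θ. Define, with r := r₀(θ, σ̂, η̂_θ, η̂_φ) and c(r,σ̂) := (μ′(r) + 4br σ̂)/(2b(r²+a²)), the three functions V_σ := −c(r,σ̂) σ̂, V_{η_θ} := −c(r,σ̂) η̂_θ + (1/(2b(r²+a²))) [ κ′(θ) η̂_θ² + ∂_θ(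 (b²/(κ(θ) sin²θ)) (η̂_φ + a sin²θ · σ̂)² ) ], and V_{η_φ} := −c(r,σ̂) η̂_φ. Then at every point with σ̂ = η̂_θ = η̂_φ = 0: (i) V_σ = V_{η_θ} = V_{η_φ} = 0, and (ii) the 3×3 Jacobian matrix ∂(V_σ, V_{η_θ}, V_{η_φ})/∂(σ̂, η̂_θ, η̂_φ) equals −κ₀ times the identity, where κ₀ := μ′(r₊)/(2b(r₊² + a²)) > 0. -/
open Set

/-!
On the fiber over `θ` the components form a vector field `V x = f x • x + g x • q x`, where `f = -c`
and `g` are continuous at the origin and the only nonzero entry of `q` is a quadratic form in the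
fiber variables. Continuity of `f` gives `f x • x = f 0 • x + o(‖x‖)`, and the other summand is
`O(‖x‖²)`, so the Fréchet derivative of `V` at the origin is `f 0 • id`, with `f 0 = -κ₀`.
-/

open Asymptotics Topology

section Linearization

variable {𝕜 E F : Type*} [NontriviallyNormedField 𝕜] [NormedAddCommGroup E] [NormedSpace 𝕜 E]
  [NormedAddCommGroup F] [NormedSpace 𝕜 F]

lemma hasFDerivAt_smul_self_zero {f : E → 𝕜} (hf : ContinuousAt f 0) :
    HasFDerivAt (fun x => f x • x) (f 0 • ContinuousLinearMap.id 𝕜 E) 0 := by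
  have hf_sub : (fun x => f x - f 0) =o[𝓝 0] fun _ => (1 : 𝕜) :=
    (isLittleO_one_iff 𝕜).2 (tendsto_sub_nhds_zero_iff.2 hf)
  refine .of_isLittleO ?_
  simpa [sub_smul] using hf_sub.smul_isBigO (isBigO_refl (fun x : E => x) (𝓝 0))

lemma hasFDerivAt_smul_zero_of_isBigO_sq {g : E → 𝕜} {q : E → F} (hg : ContinuousAt g 0)
    (hq : q =O[𝓝 0] fun x => ‖x‖ ^ 2) :
    HasFDerivAt (fun x => g x • q x) (0 : E →L[𝕜] F) 0 := by
  refine IsBigO.hasFDerivAt (n := 2) ?_ one_lt_two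
  simpa using (hg.isBigO_one ℝ).smul hq

lemma hasFDerivAt_smul_self_add_smul_zero {f g : E → 𝕜} {q : E → E} (hf : ContinuousAt f 0)
    (hg : ContinuousAt g 0) (hq : q =O[𝓝 0] fun x => ‖x‖ ^ 2) :
    HasFDerivAt (fun x => f x • x + g x • q x) (f 0 • ContinuousLinearMap.id 𝕜 E) 0 := by
  simpa using (hasFDerivAt_smul_self_zero hf).fun_add (hasFDerivAt_smul_zero_of_isBigO_sq hg hq)

lemma isBigO_deriv_mul_sq {h w : 𝕜 → 𝕜} {t : 𝕜} (hh : DifferentiableAt 𝕜 h t)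
    (hw : DifferentiableAt 𝕜 w t) (p q : E →L[𝕜] 𝕜) (l : Filter E) :
    (fun x => deriv (fun s => h s * (p x + w s * q x) ^ 2) t) =O[l] fun x => ‖x‖ ^ 2 := by
  have hderiv (x : E) : deriv (fun s => h s * (p x + w s * q x) ^ 2) t =
      deriv h t * (p x + w t * q x) ^ 2 +
        2 * h t * deriv w t * (q x * (p x + w t * q x)) := by
    have := hh.hasDerivAt.fun_mul (((hw.hasDerivAt.mul_const (q x)).const_add (p x)).fun_pow 2)
    rw [this.deriv]
    push_cast
    ring
  have hq : (fun x => q x) =O[l] fun x => ‖x‖ := (q.isBigO_id l).norm_right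
  have hpq : (fun x => p x + w t * q x) =O[l] fun x => ‖x‖ :=
    (p.isBigO_id l).norm_right.add (hq.const_mul_left _)
  simp_rw [hderiv, pow_two]
  exact ((hpq.mul hpq).const_mul_left _).add ((hq.mul hpq).const_mul_left _)

lemma deriv_single_apply {ι ι' : Type*} [Finite ι] [DecidableEq ι] [Finite ι']
    {f : (ι → 𝕜) → ι' → 𝕜} {L : (ι → 𝕜) →L[𝕜] ι' → 𝕜} (hf : HasFDerivAt f L 0) (i : ι') (j : ι) :
    deriv (fun s => f (Pi.single j s) i) 0 = L (Pi.single j 1) i := by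
  have := Fintype.ofFinite ι
  have := Fintype.ofFinite ι'
  have hsingle : HasDerivAt (fun s : 𝕜 => (Pi.single j s : ι → 𝕜)) (Pi.single j 1) 0 :=
    hasDerivAt_single j 0
  have hf' : HasFDerivAt f L (Pi.single j 0) := by rwa [Pi.single_zero]
  exact (hasDerivAt_pi.1 (hf'.comp_hasDerivAt 0 hsingle) i).deriv

lemma jacobian_eq_toMatrix' {U V W : 𝕜 → 𝕜 → 𝕜 → 𝕜} {L : (Fin 3 → 𝕜) →L[𝕜] Fin 3 → 𝕜}
    (h : HasFDerivAt
      (fun x : Fin 3 → 𝕜 => ![U (x 0) (x 1) (x 2), V (x 0) (x 1) (x 2), W (x 0) (x 1) (x 2)]) L 0) :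
    !![deriv (fun s => U s 0 0) 0, deriv (fun s => U 0 s 0) 0, deriv (fun s => U 0 0 s) 0;
       deriv (fun s => V s 0 0) 0, deriv (fun s => V 0 s 0) 0, deriv (fun s => V 0 0 s) 0;
       deriv (fun s => W s 0 0) 0, deriv (fun s => W 0 s 0) 0, deriv (fun s => W 0 0 s) 0] =
      LinearMap.toMatrix' (L : (Fin 3 → 𝕜) →ₗ[𝕜] Fin 3 → 𝕜) := by
  ext i j
  rw [LinearMap.toMatrix'_apply]
  refine Eq.trans ?_ (deriv_single_apply h i j)
  fin_cases i <;> fin_cases j <;> simp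

end Linearization

lemma continuousAt_fiber_of_continuousOn_box {X Y : Type*} [TopologicalSpace X]
    [TopologicalSpace Y] {r₀ : X → ℝ → ℝ → ℝ → Y} {Θ : Set X} {θ : X} {ε : ℝ} (hε : 0 < ε)
    (hθ : θ ∈ Θ)
    (hr₀ : ContinuousOn (fun p : X × ℝ × ℝ × ℝ => r₀ p.1 p.2.1 p.2.2.1 p.2.2.2)
      (Θ ×ˢ Ioo (-ε) ε ×ˢ Ioo (-ε) ε ×ˢ Ioo (-ε) ε)) :
    ContinuousAt (fun x : Fin 3 → ℝ => r₀ θ (x 0) (x 1) (x 2)) 0 := by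
  have hIoo : Ioo (-ε) ε ∈ 𝓝 (0 : ℝ) := Ioo_mem_nhds (neg_lt_zero.2 hε) hε
  have hslice : ContinuousAt (fun p : ℝ × ℝ × ℝ => r₀ θ p.1 p.2.1 p.2.2) (0, 0, 0) :=
    (ContinuousOn.uncurry_left (f := fun θ (p : ℝ × ℝ × ℝ) => r₀ θ p.1 p.2.1 p.2.2) θ hθ
      hr₀).continuousAt (prod_mem_nhds hIoo (prod_mem_nhds hIoo hIoo))
  have hcoord : Continuous fun x : Fin 3 → ℝ => (x 0, x 1, x 2) := by fun_prop
  exact hslice.comp_of_eq hcoord.continuousAt rfl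

lemma one_add_mul_cos_sq_pos {k : ℝ} (hk : 0 < 1 + k) (θ : ℝ) : 0 < 1 + k * Real.cos θ ^ 2 :=
  calc
    0 < Real.sin θ ^ 2 + (1 + k) * Real.cos θ ^ 2 := by
      rcases eq_or_ne (Real.cos θ) 0 with hcos | hcos
      · simp [Real.sin_sq, hcos]
      · positivity
    _ = 1 + k * Real.cos θ ^ 2 := by rw [Real.sin_sq]; ring

lemma continuousAt_horizon_rate {X : Type*} [TopologicalSpace X] {a b : ℝ} {μ : ℝ → ℝ}
    {ρ σ : X → ℝ} {x₀ : X} (hμ : ContDiffAt ℝ 1 μ (ρ x₀)) (hρ : ContinuousAt ρ x₀)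
    (hσ : ContinuousAt σ x₀) (hden : 2 * b * (ρ x₀ ^ 2 + a ^ 2) ≠ 0) :
    ContinuousAt
      (fun x => (deriv μ (ρ x) + 4 * b * ρ x * σ x) / (2 * b * (ρ x ^ 2 + a ^ 2))) x₀ := by
  have hderiv : ContinuousAt (fun x => deriv μ (ρ x)) x₀ :=
    (hμ.derivWithin (m := 0) le_rfl).continuousAt.comp hρ
  fun_prop (disch := exact hden)

lemma isBigO_horizon_angular (a b : ℝ) {θ : ℝ} {κ : ℝ → ℝ} (hκ : DifferentiableAt ℝ κ θ)
    (hκ_ne : κ θ ≠ 0) (hsin : Real.sin θ ≠ 0) (l : Filter (Fin 3 → ℝ)) :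
    (fun x : Fin 3 → ℝ => deriv κ θ * x 1 ^ 2 +
      deriv (fun θ' => b ^ 2 / (κ θ' * Real.sin θ' ^ 2)
        * (x 2 + a * Real.sin θ' ^ 2 * x 0) ^ 2) θ) =O[l] fun x => ‖x‖ ^ 2 := by
  let proj (i : Fin 3) : (Fin 3 → ℝ) →L[ℝ] ℝ := .proj i
  have hquot : DifferentiableAt ℝ (fun θ' => b ^ 2 / (κ θ' * Real.sin θ' ^ 2)) θ := by
    fun_prop (disch := positivity)
  have hsin_sq : DifferentiableAt ℝ (fun θ' => a * Real.sin θ' ^ 2) θ := by fun_prop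
  exact ((((proj 1).isBigO_id l).norm_right.pow 2).const_mul_left _).add
    (isBigO_deriv_mul_sq hquot hsin_sq (proj 2) (proj 0) l)

theorem horizon_normal_linearization_general {a b θ rp κ₀ : ℝ} {κ μ : ℝ → ℝ}
    (hb : b ≠ 0) (hκ : DifferentiableAt ℝ κ θ) (hκ_ne : κ θ ≠ 0) (hsin : Real.sin θ ≠ 0)
    (hμ : ContDiffAt ℝ 1 μ rp) (hra : rp ^ 2 + a ^ 2 ≠ 0)
    {r₀ : ℝ → ℝ → ℝ → ℝ} (hr₀cont : ContinuousAt (fun x : Fin 3 → ℝ => r₀ (x 0) (x 1) (x 2)) 0)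
    (hr₀ : r₀ 0 0 0 = rp)
    {c : ℝ → ℝ → ℝ}
    (hc : ∀ r σ, c r σ = (deriv μ r + 4 * b * r * σ) / (2 * b * (r ^ 2 + a ^ 2)))
    {Vσ Vηθ Vηφ : ℝ → ℝ → ℝ → ℝ}
    (hVσ : ∀ σ ηθ ηφ, Vσ σ ηθ ηφ = -(c (r₀ σ ηθ ηφ) σ) * σ)
    (hVηθ : ∀ σ ηθ ηφ, Vηθ σ ηθ ηφ = -(c (r₀ σ ηθ ηφ) σ) * ηθ
      + 1 / (2 * b * ((r₀ σ ηθ ηφ) ^ 2 + a ^ 2)) *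
        (deriv κ θ * ηθ ^ 2
          + deriv (fun θ' => b ^ 2 / (κ θ' * Real.sin θ' ^ 2)
              * (ηφ + a * Real.sin θ' ^ 2 * σ) ^ 2) θ))
    (hVηφ : ∀ σ ηθ ηφ, Vηφ σ ηθ ηφ = -(c (r₀ σ ηθ ηφ) σ) * ηφ)
    (hκ₀ : κ₀ = deriv μ rp / (2 * b * (rp ^ 2 + a ^ 2))) :
    (Vσ 0 0 0 = 0 ∧ Vηθ 0 0 0 = 0 ∧ Vηφ 0 0 0 = 0) ∧
    HasFDerivAt
      (fun x : Fin 3 → ℝ =>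
        ![Vσ (x 0) (x 1) (x 2), Vηθ (x 0) (x 1) (x 2), Vηφ (x 0) (x 1) (x 2)])
      (-κ₀ • ContinuousLinearMap.id ℝ (Fin 3 → ℝ)) 0 := by
  refine ⟨by simp [hVσ, hVηθ, hVηφ], ?_⟩
  have hden : 2 * b * (r₀ 0 0 0 ^ 2 + a ^ 2) ≠ 0 := by rw [hr₀]; positivity
  have hrate : ContinuousAt (fun x : Fin 3 → ℝ => -c (r₀ (x 0) (x 1) (x 2)) (x 0)) 0 := by
    simp only [hc]
    exact (continuousAt_horizon_rate (hr₀ ▸ hμ) hr₀cont (continuousAt_apply 0 _) hden).neg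
  have hrate0 : -c (r₀ 0 0 0) 0 = -κ₀ := by simp [hc, hκ₀, hr₀]
  have hweight : ContinuousAt
      (fun x : Fin 3 → ℝ => 1 / (2 * b * (r₀ (x 0) (x 1) (x 2) ^ 2 + a ^ 2))) 0 :=
    continuousAt_const.div (((hr₀cont.pow 2).add continuousAt_const).const_mul _) hden
  have hangular := ((ContinuousLinearMap.single ℝ (fun _ : Fin 3 => ℝ) 1).isBigO_comp _ _).trans
    (isBigO_horizon_angular a b hκ hκ_ne hsin (𝓝 0))
  rw [← hrate0]
  refine (hasFDerivAt_smul_self_add_smul_zero hrate hweight hangular).congr_of_eventuallyEq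
    (.of_forall fun x => ?_)
  ext i
  fin_cases i <;> simp [hVσ, hVηθ, hVηφ]

/-- Normal sink structure of the horizon: the fiber components `(V_σ, V_{η_θ}, V_{η_φ})` of the
rescaled null-geodesic generator of the Kerr–Newman–de Sitter metric, in the homogeneous fiber
coordinates `(σ̂, η̂_θ, η̂_φ)` on the characteristic set `r = r₀(θ, σ̂, η̂_θ, η̂_φ)`, vanish on
`Γ = {σ̂ = η̂_θ = η̂_φ = 0}`, and their Jacobian in `(σ̂, η̂_θ, η̂_φ)` there is `-κ₀·Id`, where
`κ₀ = μ'(r₊)/(2b(r₊²+a²)) > 0` is the surface gravity. -/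
theorem horizon_normal_linearization (𝔪 a Q Λ : ℝ)
    (b : ℝ) (hb : b = 1 + Λ * a ^ 2 / 3) (hbpos : 0 < b)
    (κ μ : ℝ → ℝ)
    (hκ : ∀ θ, κ θ = 1 + Λ * a ^ 2 / 3 * Real.cos θ ^ 2)
    (hμ : ∀ r, μ r = (r ^ 2 + a ^ 2) * (1 - Λ * r ^ 2 / 3) - 2 * 𝔪 * r + b ^ 2 * Q ^ 2)
    (rp : ℝ) (hrp : μ rp = 0) (hrp' : 0 < deriv μ rp) (hra : 0 < rp ^ 2 + a ^ 2)
    (θ₁ θ₂ ε : ℝ) (hθ₁ : 0 < θ₁) (hθ₁₂ : θ₁ < θ₂) (hθ₂ : θ₂ < Real.pi) (hε : 0 < ε)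
    (r₀ : ℝ → ℝ → ℝ → ℝ → ℝ)
    (hr₀smooth : ContDiffOn ℝ (⊤ : ℕ∞) (fun p : ℝ × ℝ × ℝ × ℝ => r₀ p.1 p.2.1 p.2.2.1 p.2.2.2)
      (Icc θ₁ θ₂ ×ˢ Ioo (-ε) ε ×ˢ Ioo (-ε) ε ×ˢ Ioo (-ε) ε))
    (hr₀ : ∀ θ ∈ Icc θ₁ θ₂, r₀ θ 0 0 0 = rp)
    (c : ℝ → ℝ → ℝ)
    (hc : ∀ r σ, c r σ = (deriv μ r + 4 * b * r * σ) / (2 * b * (r ^ 2 + a ^ 2)))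
    (Vσ Vηθ Vηφ : ℝ → ℝ → ℝ → ℝ → ℝ)
    (hVσ : ∀ θ σ ηθ ηφ, Vσ θ σ ηθ ηφ = -(c (r₀ θ σ ηθ ηφ) σ) * σ)
    (hVηθ : ∀ θ σ ηθ ηφ, Vηθ θ σ ηθ ηφ = -(c (r₀ θ σ ηθ ηφ) σ) * ηθ
      + 1 / (2 * b * ((r₀ θ σ ηθ ηφ) ^ 2 + a ^ 2)) *
        (deriv κ θ * ηθ ^ 2
          + deriv (fun θ' => b ^ 2 / (κ θ' * Real.sin θ' ^ 2)
              * (ηφ + a * Real.sin θ' ^ 2 * σ) ^ 2) θ))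
    (hVηφ : ∀ θ σ ηθ ηφ, Vηφ θ σ ηθ ηφ = -(c (r₀ θ σ ηθ ηφ) σ) * ηφ)
    (κ₀ : ℝ) (hκ₀ : κ₀ = deriv μ rp / (2 * b * (rp ^ 2 + a ^ 2))) :
    0 < κ₀ ∧
    ∀ θ ∈ Icc θ₁ θ₂,
      -- (i) the components vanish on Γ = {σ̂ = η̂_θ = η̂_φ = 0}
      (Vσ θ 0 0 0 = 0 ∧ Vηθ θ 0 0 0 = 0 ∧ Vηφ θ 0 0 0 = 0) ∧
      -- (ii) the Jacobian in (σ̂, η̂_θ, η̂_φ) on Γ is -κ₀ · Id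
      !![deriv (fun s => Vσ θ s 0 0) 0, deriv (fun s => Vσ θ 0 s 0) 0,
           deriv (fun s => Vσ θ 0 0 s) 0;
         deriv (fun s => Vηθ θ s 0 0) 0, deriv (fun s => Vηθ θ 0 s 0) 0,
           deriv (fun s => Vηθ θ 0 0 s) 0;
         deriv (fun s => Vηφ θ s 0 0) 0, deriv (fun s => Vηφ θ 0 s 0) 0,
           deriv (fun s => Vηφ θ 0 0 s) 0]
        = (-κ₀) • (1 : Matrix (Fin 3) (Fin 3) ℝ) := by
  have hκ_pos (θ : ℝ) : 0 < κ θ := hκ θ ▸ one_add_mul_cos_sq_pos (hb ▸ hbpos) θ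
  have hκ_diff : Differentiable ℝ κ := funext hκ ▸ by fun_prop
  have hμ_smooth : ContDiff ℝ 1 μ := funext hμ ▸ by fun_prop
  refine ⟨hκ₀ ▸ by positivity, fun θ hθ => ?_⟩
  have hsin : 0 < Real.sin θ := Real.sin_pos_of_mem_Ioo ⟨hθ₁.trans_le hθ.1, hθ.2.trans_lt hθ₂⟩
  have hlin := horizon_normal_linearization_general hbpos.ne' (hκ_diff θ) (hκ_pos θ).ne' hsin.ne'
    hμ_smooth.contDiffAt hra.ne'
    (continuousAt_fiber_of_continuousOn_box hε hθ hr₀smooth.continuousOn) (hr₀ θ hθ) hc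
    (hVσ θ) (hVηθ θ) (hVηφ θ) hκ₀
  exact ⟨hlin.1, by simpa using jacobian_eq_toMatrix' hlin.2⟩
end
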